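/- arXiv:1104.2639 — 4 statements merged into one kernel-verified Lean document; each statement's English description precedes it below -/
import Mathlib

section
/- Suppose X is a separable metrizable space and K ⊆ ℝ^X is a compact space (with the pointwise topology) such that for every g ∈ K and every nonempty closed set F ⊆ X, the restricted function g|F has a point of continuity. Let μ be a Radon probability measure on K and, for x ∈ X and r ∈ ℝ, put L(x,r) = {g ∈ K : g(x) ≤ r}. Then for every fixed q ∈ ℝ there is a countable set X(q) ⊆ X such that for every x ∈ X, inf{μ(L(y,q) Δ L(x,q)) : y ∈ X(q)} = 0. -/
open MeasureTheory Set

/-- positivity of the conditional probability. -/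
theorem aux_condprob {Ω : Type*} {m m0 : MeasurableSpace Ω} (hm : m ≤ m0) (μ : @Measure Ω m0)
    [IsProbabilityMeasure μ] (A : Set Ω) (hA : MeasurableSet[m0] A) :
    ∃ P : Set Ω, MeasurableSet[m] P ∧ μ (A \ P) = 0 ∧
      ∀ B, MeasurableSet[m] B → B ⊆ P → μ B ≠ 0 → μ (B ∩ A) ≠ 0 := by
  have hint : Integrable (A.indicator (fun _ => (1:ℝ))) μ :=
    (integrable_const (1:ℝ)).indicator hA
  set p : Ω → ℝ := μ[A.indicator (fun _ => (1:ℝ)) | m] with hp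
  have hpm : StronglyMeasurable[m] p := stronglyMeasurable_condExp
  have hpi : Integrable p μ := integrable_condExp
  have hp0 : 0 ≤ᵐ[μ] p := condExp_nonneg (Filter.Eventually.of_forall fun x => by
    by_cases hx : x ∈ A <;> simp [hx])
  have key : ∀ B, MeasurableSet[m] B → ∫ x in B, p x ∂μ = μ.real (B ∩ A) := by
    intro B hB
    rw [hp, setIntegral_condExp hm hint hB, setIntegral_indicator hA]
    simp
  have hP : MeasurableSet[m] {x | 0 < p x} :=
    hpm.measurable measurableSet_Ioi
  refine ⟨{x | 0 < p x}, hP, ?_, ?_⟩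
  · have h1 := key _ hP.compl
    have h2 : ∫ x in {x | 0 < p x}ᶜ, p x ∂μ ≤ 0 :=
      setIntegral_nonpos (hm _ hP.compl) (fun x hx => not_lt.1 hx)
    rw [h1] at h2
    have h3 : μ.real ({x | 0 < p x}ᶜ ∩ A) = 0 := le_antisymm h2 measureReal_nonneg
    rw [measureReal_eq_zero_iff] at h3
    rwa [Set.sdiff_eq, inter_comm]
  · intro B hB hBP hμB h0
    have h1 := key _ hB
    have h2 : 0 < ∫ x in B, p x ∂μ := by
      rw [setIntegral_pos_iff_support_of_nonneg_ae (ae_restrict_of_ae hp0) hpi.integrableOn]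
      have : Function.support p ∩ B = B := inter_eq_right.2 fun x hx => (hBP hx).ne'
      rw [this]; exact pos_iff_ne_zero.2 hμB
    rw [h1, Measure.real, h0] at h2
    simp at h2

theorem aux_C {Ω : Type*} {m m0 : MeasurableSpace Ω} (hm : m ≤ m0) (μ : @Measure Ω m0)
    [IsProbabilityMeasure μ] (A0 A1 : Set Ω) (hA0 : MeasurableSet[m0] A0)
    (hA1 : MeasurableSet[m0] A1) :
    ∃ C : Set Ω, MeasurableSet[m] C ∧
      (∀ B, MeasurableSet[m] B → B ⊆ C → μ B ≠ 0 → μ (B ∩ A0) ≠ 0 ∧ μ (B ∩ A1) ≠ 0) ∧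
      (μ C = 0 → ∃ D, MeasurableSet[m] D ∧ μ (symmDiff A0 D) ≤ μ (A0 ∪ A1)ᶜ) := by
  obtain ⟨P0, hP0, h0, h0'⟩ := aux_condprob hm μ A0 hA0
  obtain ⟨P1, hP1, h1, h1'⟩ := aux_condprob hm μ A1 hA1
  refine ⟨P0 ∩ P1, hP0.inter hP1, fun B hB hBC hμ =>
    ⟨h0' B hB (hBC.trans inter_subset_left) hμ, h1' B hB (hBC.trans inter_subset_right) hμ⟩,
    fun hC => ⟨P0, hP0, ?_⟩⟩
  have hsub : symmDiff A0 P0 ⊆ (A0 ∪ A1)ᶜ ∪ ((A0 \ P0) ∪ ((A1 \ P1) ∪ (P0 ∩ P1))) := by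
    intro x hx
    simp only [Set.mem_symmDiff, mem_union, mem_compl_iff, mem_sdiff, mem_inter_iff] at *
    tauto
  calc μ (symmDiff A0 P0) ≤ μ ((A0 ∪ A1)ᶜ ∪ ((A0 \ P0) ∪ ((A1 \ P1) ∪ (P0 ∩ P1)))) :=
        measure_mono hsub
    _ ≤ μ (A0 ∪ A1)ᶜ + (μ (A0 \ P0) + (μ (A1 \ P1) + μ (P0 ∩ P1))) :=
        (measure_union_le _ _).trans (by
          gcongr
          refine (measure_union_le _ _).trans ?_
          gcongr
          exact measure_union_le _ _)
    _ = μ (A0 ∪ A1)ᶜ := by rw [h0, h1, hC]; simp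

theorem aux_dense {Ω : Type*} {m0 : MeasurableSpace Ω} (μ : Measure Ω)
    [IsProbabilityMeasure μ] (G : Set (Set Ω)) (hG : ∀ s ∈ G, MeasurableSet s)
    (D : Set Ω) (hD : MeasurableSet[MeasurableSpace.generateFrom G] D) (e : ENNReal)
    (he : 0 < e) : ∃ c ∈ generateSetAlgebra G, μ (symmDiff c D) < e := by
  have hm : MeasurableSpace.generateFrom G ≤ m0 := MeasurableSpace.generateFrom_le hG
  have : IsFiniteMeasure (μ.trim hm) := inferInstance
  obtain ⟨c, hc, h⟩ := @exists_measure_symmDiff_lt_of_generateFrom_isSetRing Ω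
    (MeasurableSpace.generateFrom G) (μ.trim hm) _ (generateSetAlgebra G)
    isSetAlgebra_generateSetAlgebra.isSetRing
    ⟨{univ}, by simp, by simpa using isSetAlgebra_generateSetAlgebra.univ_mem, by simp⟩
    generateFrom_generateSetAlgebra_eq.symm D hD e he
  refine ⟨c, hc, ?_⟩
  have hcm : MeasurableSet[MeasurableSpace.generateFrom G] c := by
    rw [← generateFrom_generateSetAlgebra_eq]
    exact MeasurableSpace.measurableSet_generateFrom hc
  rwa [trim_measurableSet_eq hm (MeasurableSet.symmDiff hcm hD)] at h

theorem aux_finsets {X : Type*} (Z : Set X) (hZ : Z.Countable) :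
    {s : Finset X | ↑s ⊆ Z}.Countable := by
  classical
  have hcs : Countable Z := hZ.to_subtype
  have hcf : Countable (Finset Z) := Finset.countable
  refine (countable_range (fun t : Finset Z => t.image Subtype.val)).mono ?_
  intro s hs
  refine ⟨s.subtype (fun x => x ∈ Z), ?_⟩
  have hs' : ∀ x ∈ s, x ∈ Z := fun x hx => hs hx
  ext x
  simp only [Finset.mem_image, Finset.mem_subtype, Subtype.exists, exists_and_right,
    exists_eq_right]
  exact ⟨fun ⟨_, h⟩ => h, fun h => ⟨hs' x h, h⟩⟩

theorem aux_closed {X : Type*} (F : Finset X → Set X) (hF : ∀ s, (F s).Countable) :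
    ∃ Z : Set X, Z.Countable ∧ ∀ s : Finset X, ↑s ⊆ Z → F s ⊆ Z := by
  classical
  let Zn : ℕ → Set X := fun n => Nat.rec (motive := fun _ => Set X) ∅ (fun _ Z => Z ∪ ⋃ s ∈ {s : Finset X | ↑s ⊆ Z}, F s) n
  have hsucc : ∀ n, Zn (n+1) = Zn n ∪ ⋃ s ∈ {s : Finset X | ↑s ⊆ Zn n}, F s := fun n => rfl
  have hc : ∀ n, (Zn n).Countable := by
    intro n
    induction n with
    | zero => exact countable_empty
    | succ n ih =>
      rw [hsucc]
      refine ih.union (Countable.biUnion ?_ fun s _ => hF s)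
      exact aux_finsets _ ih
  have hmono : Monotone Zn := monotone_nat_of_le_succ fun n => by
    rw [hsucc]; exact subset_union_left
  refine ⟨⋃ n, Zn n, countable_iUnion hc, fun s hs => ?_⟩
  obtain ⟨n, hn⟩ : ∃ n, (↑s : Set X) ⊆ Zn n :=
    DirectedOn.exists_mem_subset_of_finset_subset_biUnion (s := s) (α := X) (ι := ℕ) (f := Zn)
      (c := univ) ⟨0, trivial⟩ (by
        intro a _ b _
        exact ⟨max a b, trivial, hmono (le_max_left _ _), hmono (le_max_right _ _)⟩)
      (by simpa using hs) |>.imp fun n h => h.2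
  refine Subset.trans ?_ (subset_iUnion Zn (n+1))
  rw [hsucc]
  refine Subset.trans ?_ subset_union_right
  exact subset_biUnion_of_mem (u := F) hn

/-- abstract countable construction -/
theorem aux_build {E T : Type*} [Countable T] (Adm : Finset E → Prop)
    (R : E → T → E → Prop)
    (step : ∀ D : Finset E, Adm D → ∀ e ∈ D, ∀ t, ∃ D' : Finset E, D ⊆ D' ∧ Adm D' ∧
      ∃ e' ∈ D', R e t e') (D0 : Finset E) (h0 : Adm D0) :
    ∃ S : Set E, ↑D0 ⊆ S ∧ (∀ s : Finset E, ↑s ⊆ S → ∃ D, Adm D ∧ s ⊆ D) ∧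
      ∀ e ∈ S, ∀ t, ∃ e' ∈ S, R e t e' := by
  classical
  by_cases hT : Nonempty T
  swap
  · exact ⟨D0, subset_rfl, fun s hs => ⟨D0, h0, by exact_mod_cast hs⟩, fun e _ t => (hT ⟨t⟩).elim⟩
  obtain ⟨f, hf⟩ := exists_surjective_nat T
  have fin : ∀ Q : Finset (E × ℕ), ∀ D : Finset E, Adm D → ∃ D', D ⊆ D' ∧ Adm D' ∧
      ∀ p ∈ Q, p.1 ∈ D → ∃ e' ∈ D', R p.1 (f p.2) e' := by
    intro Q
    induction Q using Finset.induction_on with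
    | empty => exact fun D hD => ⟨D, subset_rfl, hD, by simp⟩
    | insert p Q _ ih =>
      intro D hD
      obtain ⟨D1, h1, h2, h3⟩ := ih D hD
      by_cases hp : p.1 ∈ D
      · obtain ⟨D2, h4, h5, e', h6, h7⟩ := step D1 h2 p.1 (h1 hp) (f p.2)
        refine ⟨D2, h1.trans h4, h5, fun p' hp' hD' => ?_⟩
        rcases Finset.mem_insert.1 hp' with rfl | hp'
        · exact ⟨e', h6, h7⟩
        · obtain ⟨e2, h8, h9⟩ := h3 p' hp' hD'
          exact ⟨e2, h4 h8, h9⟩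
      · refine ⟨D1, h1, h2, fun p' hp' hD' => ?_⟩
        rcases Finset.mem_insert.1 hp' with rfl | hp'
        · exact (hp hD').elim
        · exact h3 p' hp' hD'
  have nxt : ∀ (D : {D : Finset E // Adm D}) (n : ℕ), ∃ D' : {D : Finset E // Adm D},
      D.1 ⊆ D'.1 ∧ ∀ e ∈ D.1, ∀ k ≤ n, ∃ e' ∈ D'.1, R e (f k) e' := by
    intro D n
    obtain ⟨D', h1, h2, h3⟩ := fin (D.1 ×ˢ Finset.range (n+1)) D.1 D.2
    refine ⟨⟨D', h2⟩, h1, fun e he k hk => h3 (e, k) ?_ he⟩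
    simp [he]; omega
  choose N hN1 hN2 using nxt
  let Dn : ℕ → {D : Finset E // Adm D} := fun n => Nat.rec ⟨D0, h0⟩ (fun n D => N D n) n
  have hsucc : ∀ n, Dn (n+1) = N (Dn n) n := fun n => rfl
  have hmono : Monotone (fun n => ((Dn n).1 : Set E)) := monotone_nat_of_le_succ fun n => by
    rw [hsucc]; exact_mod_cast hN1 (Dn n) n
  refine ⟨⋃ n, ((Dn n).1 : Set E), subset_iUnion (fun n => ((Dn n).1 : Set E)) 0, ?_, ?_⟩
  · intro s hs
    obtain ⟨n, hn⟩ : ∃ n, (↑s : Set E) ⊆ ((Dn n).1 : Set E) :=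
      DirectedOn.exists_mem_subset_of_finset_subset_biUnion (s := s) (α := E) (ι := ℕ)
        (f := fun n => ((Dn n).1 : Set E))
        (c := univ) ⟨0, trivial⟩ (by
          intro a _ b _
          exact ⟨max a b, trivial, hmono (le_max_left _ _), hmono (le_max_right _ _)⟩)
        (by simpa using hs) |>.imp fun n h => h.2
    exact ⟨_, (Dn n).2, by exact_mod_cast hn⟩
  · intro e he t
    obtain ⟨n, hn⟩ := mem_iUnion.1 he
    obtain ⟨k, rfl⟩ := hf t
    obtain ⟨e', h1, h2⟩ := hN2 (Dn (max n k)) (max n k) e (hmono (le_max_left n k) hn) k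
      (le_max_right _ _)
    exact ⟨e', mem_iUnion.2 ⟨max n k + 1, h1⟩, h2⟩

/-- The sets attached to the points of `Z`. -/
def auxGens {X Ω : Type*} (A : X → Bool → Set Ω) (Z : Set X) : Set (Set Ω) :=
  {S | ∃ z ∈ Z, ∃ b, A z b = S}

theorem auxGens_mono {X Ω : Type*} (A : X → Bool → Set Ω) {Z Z' : Set X} (h : Z ⊆ Z') :
    auxGens A Z ⊆ auxGens A Z' := by
  rintro S ⟨z, hz, b, rfl⟩
  exact ⟨z, h hz, b, rfl⟩

theorem auxGens_countable {X Ω : Type*} (A : X → Bool → Set Ω) {Z : Set X} (h : Z.Countable) :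
    (auxGens A Z).Countable := by
  have : auxGens A Z = ⋃ z ∈ Z, range (A z) := by
    ext S; simp only [auxGens, mem_ofPred_eq, mem_iUnion, mem_range, exists_prop]
  rw [this]
  exact h.biUnion fun z _ => countable_range _

theorem auxGens_finite {X Ω : Type*} (A : X → Bool → Set Ω) (Z : Set X) (c : Set Ω)
    (hc : c ∈ generateSetAlgebra (auxGens A Z)) :
    ∃ s : Finset X, ↑s ⊆ Z ∧ c ∈ generateSetAlgebra (auxGens A (s : Set X)) := by
  classical
  induction hc with
  | base c h =>
    obtain ⟨z, hz, b, rfl⟩ := h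
    exact ⟨{z}, by simpa using hz, .base _ ⟨z, by simp, b, rfl⟩⟩
  | empty => exact ⟨∅, by simp, .empty⟩
  | compl c _ ih =>
    obtain ⟨s, h1, h2⟩ := ih
    exact ⟨s, h1, .compl _ h2⟩
  | union c d _ _ ih1 ih2 =>
    obtain ⟨s, h1, h2⟩ := ih1
    obtain ⟨t, h3, h4⟩ := ih2
    refine ⟨s ∪ t, by simp [h1, h3], .union _ _ ?_ ?_⟩
    · exact generateSetAlgebra_mono (auxGens_mono A (by simp)) h2
    · exact generateSetAlgebra_mono (auxGens_mono A (by simp)) h4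

/-- `F` witnesses that few pairs are close to `c` and have point in `V`. -/
def auxWit {X Ω : Type*} [MeasurableSpace Ω] (μ : Measure Ω) (C : X → Set X → Set Ω)
    (V : Set X) (c : Set Ω) (e : ENNReal) (F : Finset X → Set X) : Prop :=
  (∀ s, (F s).Countable) ∧ ∀ x Z, Z.Countable → (∀ s : Finset X, ↑s ⊆ Z → F s ⊆ Z) → x ∈ V →
    μ (C x Z) ≠ 0 → ¬ μ (symmDiff c (C x Z)) < e

theorem aux_club {X Ω : Type*} [MeasurableSpace Ω] (μ : Measure Ω) [IsProbabilityMeasure μ]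
    (𝓑 : Set (Set X)) (h𝓑 : 𝓑.Countable) (A : X → Bool → Set Ω)
    (hA : ∀ x b, MeasurableSet (A x b)) (C : X → Set X → Set Ω)
    (hC : ∀ x Z, MeasurableSet[MeasurableSpace.generateFrom (auxGens A Z)] (C x Z))
    (hnew : ∀ Z : Set X, Z.Countable → ∃ x, μ (C x Z) ≠ 0) :
    ∃ S : Set (X × Set X), S.Nonempty ∧ (∀ p ∈ S, p.2.Countable ∧ μ (C p.1 p.2) ≠ 0) ∧
      ∀ p ∈ S, ∀ V ∈ 𝓑, p.1 ∈ V → ∀ e : ENNReal, e ≠ 0 → ∀ Z0 : Set X, Z0.Countable →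
        ∃ p' ∈ S, p'.1 ∈ V ∧ Z0 ⊆ p'.2 ∧ μ (C p.1 p.2 \ C p'.1 p'.2) < e := by
  classical
  let d : ℕ → ENNReal := fun k => (k : ENNReal)⁻¹
  have hW : ∀ (V : Set X) (c : Set Ω) (k : ℕ), ∃ F : Finset X → Set X, (∀ s, (F s).Countable) ∧
      ((∃ F', auxWit μ C V c (d k) F') → auxWit μ C V c (d k) F) := by
    intro V c k
    by_cases h : ∃ F', auxWit μ C V c (d k) F'
    · obtain ⟨F, hF⟩ := h
      exact ⟨F, hF.1, fun _ => hF⟩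
    · exact ⟨fun _ => ∅, by simp, fun h' => (h h').elim⟩
  choose W hWc hW using hW
  let Fs : Finset X → Set X := fun s => ⋃ V ∈ 𝓑, ⋃ c ∈ generateSetAlgebra (auxGens A (s : Set X)),
    ⋃ k : ℕ, ⋃ s' ∈ s.powerset, W V c k s'
  have hFs : ∀ s, (Fs s).Countable := by
    intro s
    refine h𝓑.biUnion fun V _ => ?_
    refine (countable_generateSetAlgebra (auxGens_countable A s.countable_toSet)).biUnion
      fun c _ => ?_
    refine countable_iUnion fun k => ?_
    exact Countable.biUnion (Finset.countable_toSet _) fun s' _ => hWc _ _ _ _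
  have hFW : ∀ Z : Set X, (∀ s : Finset X, ↑s ⊆ Z → Fs s ⊆ Z) → ∀ V ∈ 𝓑,
      ∀ c ∈ generateSetAlgebra (auxGens A Z), ∀ k, ∀ s : Finset X, ↑s ⊆ Z → W V c k s ⊆ Z := by
    intro Z hZ V hV c hc k s hs
    obtain ⟨t, ht, hct⟩ := auxGens_finite A Z c hc
    refine Subset.trans ?_ (hZ (s ∪ t) (by simp [hs, ht]))
    intro y hy
    simp only [Fs, mem_iUnion]
    exact ⟨V, hV, c, generateSetAlgebra_mono (auxGens_mono A (by simp)) hct, k, s,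
      Finset.mem_powerset.2 Finset.subset_union_left, hy⟩
  refine ⟨{p | p.2.Countable ∧ μ (C p.1 p.2) ≠ 0 ∧ ∀ s : Finset X, ↑s ⊆ p.2 → Fs s ⊆ p.2},
    ?_, fun p hp => ⟨hp.1, hp.2.1⟩, ?_⟩
  · obtain ⟨Z, hZ, hZ'⟩ := aux_closed Fs hFs
    obtain ⟨x, hx⟩ := hnew Z hZ
    exact ⟨(x, Z), hZ, hx, hZ'⟩
  · rintro ⟨x, Z⟩ ⟨hZ, hx, hcl⟩ V hV hxV e he Z0 hZ0
    have he2 : e / 2 ≠ 0 := by simp [he]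
    obtain ⟨k, hk⟩ := ENNReal.exists_inv_nat_lt he2
    obtain ⟨c, hc, hcd⟩ := aux_dense μ (auxGens A Z) (by rintro _ ⟨z, _, b, rfl⟩; exact hA z b)
      (C x Z) (hC x Z) (d k) (by simp [d])
    have hno : ¬ ∃ F', auxWit μ C V c (d k) F' := by
      intro h
      exact (hW V c k h).2 x Z hZ (hFW Z hcl V hV c hc k) hxV hx hcd
    have hno' : ¬ auxWit μ C V c (d k) (fun s => Fs s ∪ Z0) := fun h => hno ⟨_, h⟩
    simp only [auxWit, not_and, not_forall, not_not] at hno'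
    obtain ⟨x', Z', h1, h2, h3, h4, h5⟩ := hno' (fun s => (hFs s).union hZ0)
    refine ⟨(x', Z'), ⟨h1, h4, fun s hs => subset_union_left.trans (h2 s hs)⟩, h3,
      subset_union_right.trans (h2 ∅ (by simp)), ?_⟩
    have hsub : C x Z \ C x' Z' ⊆ symmDiff c (C x Z) ∪ symmDiff c (C x' Z') := by
      intro y hy
      simp only [Set.mem_symmDiff, mem_union, mem_sdiff] at *
      tauto
    calc μ (C x Z \ C x' Z') ≤ μ (symmDiff c (C x Z)) + μ (symmDiff c (C x' Z')) :=
          (measure_mono hsub).trans (measure_union_le _ _)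
      _ < e / 2 + e / 2 := ENNReal.add_lt_add (hcd.trans hk) (h5.trans hk)
      _ = e := ENNReal.add_halves e

/-- The core construction. -/
theorem aux_core {X Ω : Type*} [MeasurableSpace Ω] (μ : Measure Ω) [IsProbabilityMeasure μ]
    (𝓑 : Set (Set X)) (h𝓑 : 𝓑.Countable) (A : X → Bool → Set Ω)
    (hA : ∀ x b, MeasurableSet (A x b)) (C : X → Set X → Set Ω)
    (hC : ∀ x Z, MeasurableSet[MeasurableSpace.generateFrom (auxGens A Z)] (C x Z))
    (hC2 : ∀ x Z B, MeasurableSet[MeasurableSpace.generateFrom (auxGens A Z)] B → B ⊆ C x Z →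
      μ B ≠ 0 → ∀ b, μ (B ∩ A x b) ≠ 0)
    (hnew : ∀ Z : Set X, Z.Countable → ∃ x, μ (C x Z) ≠ 0) :
    ∃ E : Set (X × Bool), E.Nonempty ∧
      (∀ s : Finset (X × Bool), ↑s ⊆ E → (⋂ e ∈ s, A e.1 e.2).Nonempty) ∧
      ∀ e ∈ E, ∀ V ∈ 𝓑, e.1 ∈ V → ∀ b, ∃ y ∈ V, (y, b) ∈ E := by
  classical
  obtain ⟨S, ⟨p0, hp0⟩, hS1, hS2⟩ := aux_club μ 𝓑 h𝓑 A hA C hC hnew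
  have hle : ∀ Z Z' : Set X, Z ⊆ Z' → MeasurableSpace.generateFrom (auxGens A Z) ≤
      MeasurableSpace.generateFrom (auxGens A Z') := fun Z Z' h =>
    MeasurableSpace.generateFrom_mono (auxGens_mono A h)
  let Adm : Finset ((X × Set X) × Bool) → Prop := fun D => ∃ (B : Set Ω) (W : Set X), W.Countable ∧
    MeasurableSet[MeasurableSpace.generateFrom (auxGens A W)] B ∧ μ B ≠ 0 ∧
    ∀ e ∈ D, e.1 ∈ S ∧ B ⊆ C e.1.1 e.1.2 ∧ B ⊆ A e.1.1 e.2
  have hAm : ∀ x b (Z : Set X), x ∈ Z →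
      MeasurableSet[MeasurableSpace.generateFrom (auxGens A Z)] (A x b) := fun x b Z h =>
    MeasurableSpace.measurableSet_generateFrom ⟨x, h, b, rfl⟩
  have ext : ∀ (D : Finset ((X × Set X) × Bool)) (B : Set Ω) (W : Set X), W.Countable →
    MeasurableSet[MeasurableSpace.generateFrom (auxGens A W)] B →
    (∀ e ∈ D, e.1 ∈ S ∧ B ⊆ C e.1.1 e.1.2 ∧ B ⊆ A e.1.1 e.2) →
    ∀ p ∈ S, W ⊆ p.2 → μ (B ∩ C p.1 p.2) ≠ 0 → ∀ b, Adm (insert (p, b) D) := by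
    intro D B W hW hB hD p hp hWp hμ b
    have hBm : MeasurableSet[MeasurableSpace.generateFrom (auxGens A p.2)] (B ∩ C p.1 p.2) :=
      MeasurableSet.inter (hle _ _ hWp _ hB) (hC _ _)
    refine ⟨(B ∩ C p.1 p.2) ∩ A p.1 b, insert p.1 p.2, (hS1 p hp).1.insert _, ?_,
      hC2 _ _ _ hBm inter_subset_right hμ b, ?_⟩
    · exact MeasurableSet.inter (hle _ _ (subset_insert _ _) _ hBm) (hAm _ _ _ (mem_insert _ _))
    · intro e he
      rcases Finset.mem_insert.1 he with rfl | he
      · exact ⟨hp, fun y hy => hy.1.2, fun y hy => hy.2⟩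
      · obtain ⟨h1, h2, h3⟩ := hD e he
        exact ⟨h1, fun y hy => h2 hy.1.1, fun y hy => h3 hy.1.1⟩
  have : Countable 𝓑 := h𝓑.to_subtype
  obtain ⟨E, hE0, hE1, hE2⟩ := aux_build (T := 𝓑 × Bool) Adm
    (fun e t e' => e.1.1 ∈ t.1.1 → e'.1.1 ∈ t.1.1 ∧ e'.2 = t.2) (by
      rintro D ⟨B, W, hW, hB, hμ, hD⟩ e he ⟨⟨V, hV⟩, b⟩
      by_cases heV : e.1.1 ∈ V
      swap
      · exact ⟨D, subset_rfl, ⟨B, W, hW, hB, hμ, hD⟩, e, he, fun h => (heV h).elim⟩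
      obtain ⟨h1, h2, h3⟩ := hD e he
      obtain ⟨p, hp, hpV, hWp, hlt⟩ := hS2 e.1 h1 V hV heV (μ B) hμ W hW
      refine ⟨insert (p, b) D, Finset.subset_insert _ _, ext D B W hW hB hD p hp hWp ?_ b,
        (p, b), Finset.mem_insert_self _ _, fun _ => ⟨hpV, rfl⟩⟩
      intro h0
      have : μ B ≤ μ (B ∩ C p.1 p.2) + μ (C e.1.1 e.1.2 \ C p.1 p.2) := by
        refine (measure_mono ?_).trans (measure_union_le _ _)
        intro y hy
        by_cases hy' : y ∈ C p.1 p.2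
        · exact Or.inl ⟨hy, hy'⟩
        · exact Or.inr ⟨h2 hy, hy'⟩
      rw [h0, zero_add] at this
      exact absurd hlt (not_lt.2 this)) {(p0, true)} (by
      have := ext ∅ univ ∅ countable_empty (@MeasurableSet.univ _ (_)) (by simp) p0 hp0 (by simp)
        (by simpa using (hS1 p0 hp0).2) true
      simpa using this)
  refine ⟨(fun e => (e.1.1, e.2)) '' E, ⟨_, mem_image_of_mem _ (hE0 (by simp; rfl))⟩, ?_, ?_⟩
  · intro s hs
    obtain ⟨t, ht, rfl⟩ := Finset.subset_set_image_iff.1 hs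
    obtain ⟨D, ⟨B, W, hW, hB, hμ, hD⟩, htD⟩ := hE1 t ht
    obtain ⟨g, hg⟩ := nonempty_of_measure_ne_zero hμ
    refine ⟨g, ?_⟩
    simp only [mem_iInter, Finset.mem_image]
    rintro _ ⟨e, he, rfl⟩
    exact (hD e (htD he)).2.2 hg
  · rintro _ ⟨e, he, rfl⟩ V hV heV b
    obtain ⟨e', he', h⟩ := hE2 e he (⟨V, hV⟩, b)
    obtain ⟨h1, h2⟩ := h heV
    exact ⟨e'.1.1, h1, e', he', by simp at h2; simp [← h2]⟩

theorem exists_countable_approx_for_level_sets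
    {X : Type*} [TopologicalSpace X] [TopologicalSpace.SeparableSpace X]
    [TopologicalSpace.MetrizableSpace X]
    (K : Set (X → ℝ)) (hK : IsCompact K)
    (hpc : ∀ g ∈ K, ∀ F : Set X, IsClosed F → F.Nonempty →
      ∃ x ∈ F, ContinuousWithinAt g F x)
    [MeasurableSpace K] [BorelSpace K]
    (μ : Measure K) [IsProbabilityMeasure μ] [μ.Regular]
    (q : ℝ) :
    ∃ Xq : Set X, Xq.Countable ∧ ∀ x : X,
      (⨅ y ∈ Xq,
        μ (symmDiff {g : K | g.val y ≤ q} {g : K | g.val x ≤ q})) = 0 := by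
  classical
  have : SecondCountableTopology X := by
    let _ := TopologicalSpace.metrizableSpaceMetric X
    exact UniformSpace.secondCountable_of_separable X
  have : CompactSpace K := isCompact_iff_compactSpace.1 hK
  have hev : ∀ x : X, Continuous (fun g : K => g.val x) := fun x =>
    (continuous_apply x).comp continuous_subtype_val
  let r : ℕ → ℝ := fun n => q + 1 / ((n : ℝ) + 1)
  have hr : ∀ n, q < r n := fun n => by
    have : (0:ℝ) < 1 / ((n : ℝ) + 1) := Nat.one_div_pos_of_nat
    simp only [r]; linarith
  let A : ℕ → X → Bool → Set K := fun n x b =>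
    if b then {g : K | g.val x ≤ q} else {g : K | r n ≤ g.val x}
  have hAcl : ∀ n x b, IsClosed (A n x b) := by
    intro n x b
    cases b
    · exact isClosed_le continuous_const (hev x)
    · exact isClosed_le (hev x) continuous_const
  have hA : ∀ n x b, MeasurableSet (A n x b) := fun n x b => (hAcl n x b).measurableSet
  have hgm : ∀ n Z, ∀ s ∈ auxGens (A n) Z, MeasurableSet s := by
    rintro n Z _ ⟨z, _, b, rfl⟩; exact hA n z b
  have hgen : ∀ n Z, MeasurableSpace.generateFrom (auxGens (A n) Z) ≤ ‹MeasurableSpace K› :=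
    fun n Z => MeasurableSpace.generateFrom_le (hgm n Z)
  have hCex := fun n x Z => aux_C (hgen n Z) μ (A n x true) (A n x false) (hA n x true) (hA n x false)
  choose C hC1 hC2 hC3 using hCex
  -- the nonseparable case is impossible
  have hsep : ∀ n, ∃ Z : Set X, Z.Countable ∧ ∀ x, μ (C n x Z) = 0 := by
    intro n
    by_contra hcon
    push Not at hcon
    obtain ⟨E, ⟨e0, he0⟩, hE1, hE2⟩ := aux_core μ (TopologicalSpace.countableBasis X)
      (TopologicalSpace.countable_countableBasis X) (A n) (hA n) (C n) (hC1 n)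
      (by
        intro x Z B hB hBC hμ b
        have := hC2 n x Z B hB hBC hμ
        cases b
        · exact this.2
        · exact this.1) hcon
    obtain ⟨g, hg⟩ : (⋂ e : E, A n e.1.1 e.1.2).Nonempty := by
      apply CompactSpace.iInter_nonempty
      · exact fun e => hAcl _ _ _
      · intro s
        have := hE1 (s.image Subtype.val) (by intro y; simp; tauto)
        simpa using this
    have hg' : ∀ e ∈ E, g ∈ A n e.1 e.2 := fun e he => mem_iInter.1 hg ⟨e, he⟩
    obtain ⟨x, hxF, hx⟩ := hpc g.1 g.2 (closure (Prod.fst '' E)) isClosed_closure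
      ⟨e0.1, subset_closure ⟨e0, he0, rfl⟩⟩
    have hpos : 0 < (r n - q) / 2 := by linarith [hr n]
    have hball := hx (Metric.ball_mem_nhds (g.1 x) hpos)
    rw [Filter.mem_map, mem_nhdsWithin] at hball
    obtain ⟨U, hUo, hxU, hU⟩ := hball
    obtain ⟨V, hV, hxV, hVU⟩ :=
      (TopologicalSpace.isBasis_countableBasis X).exists_subset_of_mem_open hxU hUo
    obtain ⟨_, hyV, ⟨e, he, rfl⟩⟩ := mem_closure_iff.1 hxF V
      ((TopologicalSpace.isBasis_countableBasis X).isOpen hV) hxV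
    obtain ⟨y, hy, hyE⟩ := hE2 e he V hV hyV true
    obtain ⟨z, hz, hzE⟩ := hE2 e he V hV hyV false
    have h1 : g.1 y ≤ q := hg' _ hyE
    have h2 : r n ≤ g.1 z := hg' _ hzE
    have h3 := hU ⟨hVU hy, subset_closure ⟨_, hyE, rfl⟩⟩
    have h4 := hU ⟨hVU hz, subset_closure ⟨_, hzE, rfl⟩⟩
    simp only [mem_preimage, Metric.mem_ball, Real.dist_eq, abs_lt] at h3 h4
    linarith [h3.1, h3.2, h4.1, h4.2]
  choose Z hZc hZ using hsep
  -- a countable family of approximating sets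
  let 𝒜 : Set (Set K) := ⋃ n, generateSetAlgebra (auxGens (A n) (Z n))
  have h𝒜 : 𝒜.Countable :=
    countable_iUnion fun n => countable_generateSetAlgebra (auxGens_countable _ (hZc n))
  have happ : ∀ x (e : ENNReal), e ≠ 0 → ∃ c ∈ 𝒜, μ (symmDiff c {g : K | g.val x ≤ q}) < e := by
    intro x e he
    have he2 : 0 < e / 2 := by simp [pos_iff_ne_zero, he]
    have hmid : Filter.Tendsto (fun n => μ (A n x true ∪ A n x false)ᶜ) Filter.atTop
        (nhds (μ (⋂ n, (A n x true ∪ A n x false)ᶜ))) := by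
      apply tendsto_measure_iInter_atTop
      · exact fun n => ((hA n x true).union (hA n x false)).compl.nullMeasurableSet
      · intro m n hmn
        apply compl_subset_compl.2
        refine union_subset_union subset_rfl ?_
        intro g (hg : r m ≤ g.1 x)
        have : r n ≤ r m := by
          simp only [r]
          gcongr
        exact this.trans hg
      · exact ⟨0, measure_ne_top _ _⟩
    have hempty : (⋂ n, (A n x true ∪ A n x false)ᶜ) = ∅ := by
      rw [eq_empty_iff_forall_notMem]
      intro g hg
      rw [mem_iInter] at hg
      have h1 : q < g.1 x := not_le.1 fun h => hg 0 (Or.inl h)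
      obtain ⟨n, hn⟩ := exists_nat_one_div_lt (sub_pos.2 h1)
      exact hg n (Or.inr (show q + 1 / ((n : ℝ) + 1) ≤ g.1 x by linarith))
    rw [hempty, measure_empty] at hmid
    obtain ⟨n, hn⟩ := (hmid.eventually (gt_mem_nhds he2)).exists
    obtain ⟨D, hD, hDle⟩ := hC3 n x (Z n) (hZ n x)
    obtain ⟨c, hc, hcD⟩ := aux_dense μ _ (hgm n (Z n)) D hD (e / 2) he2
    refine ⟨c, mem_iUnion.2 ⟨n, hc⟩, ?_⟩
    calc μ (symmDiff c (A n x true)) ≤ μ (symmDiff c D) + μ (symmDiff D (A n x true)) :=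
          measure_symmDiff_le _ _ _
      _ < e / 2 + e / 2 := ENNReal.add_lt_add hcD (by rw [symmDiff_comm]; exact hDle.trans_lt hn)
      _ = e := ENNReal.add_halves e
  let P : Set K × ℕ → X → Prop := fun t y =>
    μ (symmDiff t.1 {g : K | g.val y ≤ q}) < ((t.2 : ENNReal))⁻¹
  refine ⟨⋃ t ∈ {t : Set K × ℕ | t.1 ∈ 𝒜}, {y | ∃ h : ∃ y, P t y, y = h.choose}, ?_, ?_⟩
  · apply Countable.biUnion
    · have hpr : (𝒜 ×ˢ (univ : Set ℕ)).Countable := h𝒜.prod countable_univ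
      refine hpr.mono ?_
      intro t ht
      exact ⟨ht, trivial⟩
    · intro t _
      apply Set.Subsingleton.countable
      rintro y ⟨h, rfl⟩ z ⟨h', rfl⟩
      rfl
  · intro x
    by_contra hne
    have he2 : (⨅ y ∈ ⋃ t ∈ {t : Set K × ℕ | t.1 ∈ 𝒜}, {y | ∃ h : ∃ y, P t y, y = h.choose},
        μ (symmDiff {g : K | g.val y ≤ q} {g : K | g.val x ≤ q})) / 2 ≠ 0 := by simpa using hne
    obtain ⟨k, hk⟩ := ENNReal.exists_inv_nat_lt he2
    obtain ⟨c, hc, hcx⟩ := happ x (k : ENNReal)⁻¹ (by simp)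
    have hex : ∃ y, P (c, k) y := ⟨x, hcx⟩
    have hle := iInf₂_le (f := fun y (_ : y ∈ ⋃ t ∈ {t : Set K × ℕ | t.1 ∈ 𝒜},
      {y | ∃ h : ∃ y, P t y, y = h.choose}) =>
        μ (symmDiff {g : K | g.val y ≤ q} {g : K | g.val x ≤ q})) hex.choose
        (by simp only [mem_iUnion]; exact ⟨(c, k), hc, hex, rfl⟩)
    have hy : μ (symmDiff c {g : K | g.val hex.choose ≤ q}) < (k : ENNReal)⁻¹ := hex.choose_spec
    refine absurd hle (not_le.2 ?_)
    calc _ ≤ μ (symmDiff {g : K | g.val hex.choose ≤ q} c)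
          + μ (symmDiff c {g : K | g.val x ≤ q}) := measure_symmDiff_le _ _ _
      _ < _ / 2 + _ / 2 := ENNReal.add_lt_add (by rw [symmDiff_comm]; exact hy.trans hk)
          (hcx.trans hk)
      _ = _ := ENNReal.add_halves _
end

section
/- Let H be the Helly space. For every set E ⊆ [0,1] there exists a countable set F ⊆ E such that for every g ∈ H and every closed interval I ⊆ ℝ, g[E] ⊆ I if and only if g[F] ⊆ I. Consequently, for every closed interval I ⊆ ℝ and every E ⊆ [0,1], the set A(I,E) = {g ∈ H : g[E] ⊆ I} is a closed G_δ subset of H. -/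
open Set

/-- The Helly space: all nondecreasing functions from `[0,1]` to `[0,1]`, viewed as a
subspace of `ℝ^[0,1]` with the topology of pointwise convergence. -/
def Helly : Set (↥unitInterval → ℝ) :=
  {f | Monotone f ∧ ∀ x, f x ∈ Set.Icc (0 : ℝ) 1}

theorem helly_A_closed_Gdelta (E : Set ↥unitInterval) :
    (∃ F ⊆ E, F.Countable ∧ ∀ g ∈ Helly, ∀ a b : ℝ,
        ((∀ x ∈ E, g x ∈ Set.Icc a b) ↔ ∀ x ∈ F, g x ∈ Set.Icc a b)) ∧
    ∀ a b : ℝ,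
      IsClosed {g : Helly | ∀ x ∈ E, g.val x ∈ Set.Icc a b} ∧
      IsGδ {g : Helly | ∀ x ∈ E, g.val x ∈ Set.Icc a b} := by
  have key : ∃ F ⊆ E, F.Countable ∧ ∀ g ∈ Helly, ∀ a b : ℝ,
        ((∀ x ∈ E, g x ∈ Set.Icc a b) ↔ ∀ x ∈ F, g x ∈ Set.Icc a b) := by
    obtain ⟨D, hDc, hDd, hbot, htop⟩ := exists_countable_dense_bot_top ↥E
    refine ⟨Subtype.val '' D, ?_, hDc.image _, ?_⟩
    · rintro _ ⟨x, -, rfl⟩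
      exact x.2
    · intro g hg a b
      constructor
      · rintro h _ ⟨x, -, rfl⟩
        exact h x x.2
      · intro h x hx
        have hlo : ∃ y ∈ D, y ≤ (⟨x, hx⟩ : E) := by
          by_cases hb : IsBot (⟨x, hx⟩ : E)
          · exact ⟨_, hbot _ hb, le_rfl⟩
          · simp only [IsBot, not_forall, not_le] at hb
            have ho : IsOpen {z : E | z < ⟨x, hx⟩} :=
              (isOpen_Iio (a := x)).preimage continuous_subtype_val
            obtain ⟨y, hy, hyD⟩ := hDd.inter_open_nonempty _ ho hb
            exact ⟨y, hyD, le_of_lt hy⟩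
        have hhi : ∃ y ∈ D, (⟨x, hx⟩ : E) ≤ y := by
          by_cases hb : IsTop (⟨x, hx⟩ : E)
          · exact ⟨_, htop _ hb, le_rfl⟩
          · simp only [IsTop, not_forall, not_le] at hb
            have ho : IsOpen {z : E | ⟨x, hx⟩ < z} :=
              (isOpen_Ioi (a := x)).preimage continuous_subtype_val
            obtain ⟨y, hy, hyD⟩ := hDd.inter_open_nonempty _ ho hb
            exact ⟨y, hyD, le_of_lt hy⟩
        obtain ⟨y, hyD, hy⟩ := hlo
        obtain ⟨z, hzD, hz⟩ := hhi
        exact ⟨(h y ⟨y, hyD, rfl⟩).1.trans (hg.1 hy), (hg.1 hz).trans (h z ⟨z, hzD, rfl⟩).2⟩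
  refine ⟨key, fun a b => ?_⟩
  have hc : ∀ x : ↥unitInterval, Continuous fun g : Helly => g.val x :=
    fun x => (continuous_apply x).comp continuous_subtype_val
  constructor
  · simp only [Set.ofPred_forall]
    exact isClosed_biInter fun x _ => isClosed_Icc.preimage (hc x)
  · obtain ⟨F, -, hFc, hF⟩ := key
    have : {g : Helly | ∀ x ∈ E, g.val x ∈ Set.Icc a b} =
        ⋂ x ∈ F, (fun g : Helly => g.val x) ⁻¹' Set.Icc a b := by
      ext g
      simp only [Set.mem_iInter, Set.mem_preimage]
      exact hF g.1 g.2 a b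
    rw [this]
    exact IsGδ.biInter hFc fun x _ => (isClosed_Icc.isGδ).preimage (hc x)
end

section
/- Every Radon probability measure on the Helly space H is strongly countably determined. -/
open MeasureTheory Set

/-- A (Radon probability) measure `μ` on a topological space is *strongly countably
determined* if there is a countable family `𝓕` of closed `Gδ` sets such that
`μ U = sup {μ F : F ∈ 𝓕, F ⊆ U}` for every open set `U`. -/
def StronglyCountablyDetermined {K : Type*} [TopologicalSpace K] [MeasurableSpace K]
    (μ : Measure K) : Prop :=
  ∃ 𝓕 : Set (Set K), 𝓕.Countable ∧ (∀ F ∈ 𝓕, IsClosed F ∧ IsGδ F) ∧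
    ∀ U : Set K, IsOpen U → μ U = ⨆ (F : Set K) (_ : F ∈ 𝓕) (_ : F ⊆ U), μ F

namespace HellyAux

lemma measurable_eval [MeasurableSpace ↥Helly] [BorelSpace ↥Helly] (t : ↥unitInterval) :
    Measurable (fun f : ↥Helly => f.1 t) :=
  ((continuous_apply t).comp continuous_subtype_val).measurable

lemma integrable_eval [MeasurableSpace ↥Helly] [BorelSpace ↥Helly]
    (μ : Measure ↥Helly) [IsProbabilityMeasure μ] (t : ↥unitInterval) :
    Integrable (fun f : ↥Helly => f.1 t) μ := by
  refine Integrable.of_bound (measurable_eval t).aestronglyMeasurable 1 ?_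
  refine Filter.Eventually.of_forall fun f => ?_
  have := f.2.2 t
  rw [Real.norm_eq_abs, abs_le]
  exact ⟨by linarith [this.1], this.2⟩

/-- Abstract step: a family of nonnegative gaps whose integrals get arbitrarily small has
a.e. infimum zero. -/
lemma ae_small {Ω : Type*} [MeasurableSpace Ω] (μ : Measure Ω) {ι : Type*} [Countable ι]
    (g : ι → Ω → ℝ) (hm : ∀ i, Measurable (g i)) (hi : ∀ i, Integrable (g i) μ)
    (h0 : ∀ i ω, 0 ≤ g i ω) (hs : ∀ ε > 0, ∃ i, ∫ ω, g i ω ∂μ < ε) :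
    ∀ᵐ ω ∂μ, ∀ ε > 0, ∃ i, g i ω < ε := by
  have hmeas : Measurable (fun ω => ⨅ i, ENNReal.ofReal (g i ω)) :=
    Measurable.iInf fun i => (hm i).ennreal_ofReal
  have hz : ∫⁻ ω, ⨅ i, ENNReal.ofReal (g i ω) ∂μ = 0 := by
    refine le_antisymm (ENNReal.le_of_forall_pos_le_add fun ε hε _ => ?_) bot_le
    obtain ⟨i, hlt⟩ := hs ε hε
    calc ∫⁻ ω, ⨅ i, ENNReal.ofReal (g i ω) ∂μ ≤ ∫⁻ ω, ENNReal.ofReal (g i ω) ∂μ :=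
          lintegral_mono fun ω => iInf_le _ i
      _ = ENNReal.ofReal (∫ ω, g i ω ∂μ) :=
          (ofReal_integral_eq_lintegral_ofReal (hi i) (Filter.Eventually.of_forall (h0 i))).symm
      _ ≤ 0 + ε := by
          rw [zero_add]
          exact ENNReal.ofReal_le_of_le_toReal (by simpa using hlt.le)
  rw [lintegral_eq_zero_iff hmeas] at hz
  filter_upwards [hz] with ω hω ε hε
  have : (⨅ i, ENNReal.ofReal (g i ω)) < ENNReal.ofReal ε := by
    rw [hω]; simpa using hε
  obtain ⟨i, hlt⟩ := iInf_lt_iff.1 this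
  exact ⟨i, (ENNReal.ofReal_lt_ofReal_iff hε).1 hlt⟩

/-- The subbasic closed sets. -/
def C (p : ↥unitInterval × ℚ × Bool) : Set ↥Helly :=
  if p.2.2 then {f | (p.2.1 : ℝ) ≤ f.1 p.1} else {f | f.1 p.1 ≤ (p.2.1 : ℝ)}

lemma isClosed_C (p) : IsClosed (C p) := by
  have h : Continuous (fun f : ↥Helly => f.1 p.1) :=
    (continuous_apply _).comp continuous_subtype_val
  unfold C
  split_ifs
  · exact isClosed_le continuous_const h
  · exact isClosed_le h continuous_const

lemma isGδ_C (p) : IsGδ (C p) := by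
  have h : Continuous (fun f : ↥Helly => f.1 p.1) :=
    (continuous_apply _).comp continuous_subtype_val
  unfold C
  split_ifs
  · exact (isClosed_Ici (a := (p.2.1 : ℝ))).isGδ.preimage h
  · exact (isClosed_Iic (a := (p.2.1 : ℝ))).isGδ.preimage h

lemma exists_D [MeasurableSpace ↥Helly] [BorelSpace ↥Helly]
    (μ : Measure ↥Helly) [IsProbabilityMeasure μ] :
    ∃ D : Set ↥unitInterval, D.Countable ∧ ∀ t, ∀ᵐ f ∂μ, ∀ ε > 0,
      (∃ d ∈ D, d ≤ t ∧ f.1 t - f.1 d < ε) ∧ (∃ d ∈ D, t ≤ d ∧ f.1 d - f.1 t < ε) := by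
  let G : ↥unitInterval → ℝ := fun t => ∫ f, f.1 t ∂μ
  have hG : Monotone G := fun a b hab =>
    integral_mono (integrable_eval μ a) (integrable_eval μ b) fun f => f.2.1 hab
  obtain ⟨D₀, hD₀c, hD₀d, hbot, htop⟩ := exists_countable_dense_bot_top ↥unitInterval
  refine ⟨D₀ ∪ {t | ¬ ContinuousAt G t}, hD₀c.union hG.countable_not_continuousAt, fun t => ?_⟩
  set D := D₀ ∪ {t | ¬ ContinuousAt G t} with hD
  have hDc : D.Countable := hD₀c.union hG.countable_not_continuousAt
  by_cases ht : t ∈ D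
  · refine Filter.Eventually.of_forall fun f ε hε => ?_
    exact ⟨⟨t, ht, le_rfl, by simpa using hε⟩, ⟨t, ht, le_rfl, by simpa using hε⟩⟩
  have hcont : ContinuousAt G t := by
    by_contra h; exact ht (Or.inr h)
  have h0 : ⊥ < t := bot_lt_iff_ne_bot.2 fun h =>
    ht (Or.inl (h ▸ hbot ⊥ isBot_bot))
  have h1 : t < ⊤ := lt_top_iff_ne_top.2 fun h =>
    ht (Or.inl (h ▸ htop ⊤ isTop_top))
  have hL : ∀ᵐ f ∂μ, ∀ ε > 0, ∃ d : {d // d ∈ D ∧ d ≤ t}, f.1 t - f.1 d < ε := by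
    have : Countable {d // d ∈ D ∧ d ≤ t} := (hDc.mono fun x hx => hx.1 : {d | d ∈ D ∧ d ≤ t}.Countable).to_subtype
    refine ae_small μ (fun (d : {d // d ∈ D ∧ d ≤ t}) (f : ↥Helly) => f.1 t - f.1 d) (fun d => ?_) (fun d => ?_) (fun d f => ?_) fun ε hε => ?_
    · exact (measurable_eval t).sub (measurable_eval d)
    · exact (integrable_eval μ t).sub (integrable_eval μ d)
    · exact sub_nonneg.2 (f.2.1 d.2.2)
    · have hev : ∀ᶠ s in nhds t, G t - ε < G s :=
        hcont.eventually (lt_mem_nhds (by linarith))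
      obtain ⟨l, hl, hls⟩ := exists_Ioc_subset_of_mem_nhds hev ⟨⊥, h0⟩
      obtain ⟨d, hd, hd1, hd2⟩ := hD₀d.exists_between hl
      refine ⟨⟨d, Or.inl hd, hd2.le⟩, ?_⟩
      rw [integral_sub (integrable_eval μ t) (integrable_eval μ d)]
      have : G t - ε < G d := hls ⟨hd1, hd2.le⟩
      change G t - G d < ε
      linarith
  have hR : ∀ᵐ f ∂μ, ∀ ε > 0, ∃ d : {d // d ∈ D ∧ t ≤ d}, f.1 d - f.1 t < ε := by
    have : Countable {d // d ∈ D ∧ t ≤ d} := (hDc.mono fun x hx => hx.1 : {d | d ∈ D ∧ t ≤ d}.Countable).to_subtype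
    refine ae_small μ (fun (d : {d // d ∈ D ∧ t ≤ d}) (f : ↥Helly) => f.1 d - f.1 t) (fun d => ?_) (fun d => ?_) (fun d f => ?_) fun ε hε => ?_
    · exact (measurable_eval d).sub (measurable_eval t)
    · exact (integrable_eval μ d).sub (integrable_eval μ t)
    · exact sub_nonneg.2 (f.2.1 d.2.2)
    · have hev : ∀ᶠ s in nhds t, G s < G t + ε :=
        hcont.eventually (gt_mem_nhds (by linarith))
      obtain ⟨l, hl, hls⟩ := exists_Ico_subset_of_mem_nhds hev ⟨⊤, h1⟩
      obtain ⟨d, hd, hd1, hd2⟩ := hD₀d.exists_between hl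
      refine ⟨⟨d, Or.inl hd, hd1.le⟩, ?_⟩
      rw [integral_sub (integrable_eval μ d) (integrable_eval μ t)]
      have : G d < G t + ε := hls ⟨hd1.le, hd2⟩
      change G d - G t < ε
      linarith
  filter_upwards [hL, hR] with f hfL hfR ε hε
  obtain ⟨d, hd⟩ := hfL ε hε
  obtain ⟨e, he⟩ := hfR ε hε
  exact ⟨⟨d, d.2.1, d.2.2, hd⟩, ⟨e, e.2.1, e.2.2, he⟩⟩

/-- finite intersections -/
def I (s : Finset (↥unitInterval × ℚ × Bool)) : Set ↥Helly := ⋂ p ∈ s, C p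

lemma step (D : Set ↥unitInterval) (t : ↥unitInterval) (f : ↥Helly)
    (h : ∀ ε > 0,
      (∃ d ∈ D, d ≤ t ∧ f.1 t - f.1 d < ε) ∧ (∃ d ∈ D, t ≤ d ∧ f.1 d - f.1 t < ε))
    (u : Set ℝ) (hu : IsOpen u) (hf : f.1 t ∈ u) :
    ∃ s : Finset (↥unitInterval × ℚ × Bool), (∀ p ∈ s, p.1 ∈ D) ∧ f ∈ I s ∧
      ∀ g ∈ I s, g.1 t ∈ u := by
  obtain ⟨a, b, hab, hsub⟩ := mem_nhds_iff_exists_Ioo_subset.1 (hu.mem_nhds hf)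
  obtain ⟨d, hd, hdt, hd'⟩ := (h (f.1 t - a) (sub_pos.2 hab.1)).1
  obtain ⟨e, he, hte, he'⟩ := (h (b - f.1 t) (sub_pos.2 hab.2)).2
  obtain ⟨q, hq1, hq2⟩ := exists_rat_btwn (show a < f.1 d by linarith)
  obtain ⟨r, hr1, hr2⟩ := exists_rat_btwn (show f.1 e < b by linarith)
  classical
  refine ⟨{(d, q, true), (e, r, false)}, ?_, ?_, ?_⟩
  · simp [hd, he]
  · simp [I, C, hq2.le, hr1.le]
  · intro g hg
    simp [I, C] at hg
    exact hsub ⟨hq1.trans_le (hg.1.trans (g.2.1 hdt)), (g.2.1 hte).trans_lt (hg.2.trans_lt hr2)⟩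

lemma isClosed_I (s) : IsClosed (I s) := isClosed_biInter fun p _ => isClosed_C p

lemma isGδ_I (s) : IsGδ (I s) :=
  IsGδ.biInter s.countable_toSet fun p _ => isGδ_C p

end HellyAux

open HellyAux in
theorem helly_stronglyCountablyDetermined
    [MeasurableSpace ↥Helly] [BorelSpace ↥Helly]
    (μ : Measure ↥Helly) [IsProbabilityMeasure μ] [μ.Regular] :
    StronglyCountablyDetermined μ := by
  classical
  obtain ⟨D, hDc, hD⟩ := exists_D μ
  have : Countable D := hDc.to_subtype
  let S : Set (Finset (↥unitInterval × ℚ × Bool)) := {s | ∀ p ∈ s, p.1 ∈ D}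
  have hS : S.Countable := by
    have h1 : (D ×ˢ (univ : Set (ℚ × Bool))).Countable := hDc.prod (to_countable _)
    refine (countable_ofPred_finite_subset h1).preimage_of_injOn
      (f := fun s : Finset (↥unitInterval × ℚ × Bool) => (s : Set _))
      Finset.coe_injective.injOn |>.mono fun s hs => ?_
    exact ⟨s.finite_toSet, fun p hp => ⟨hs p hp, trivial⟩⟩
  have hSc : Countable S := hS.to_subtype
  let A : Finset S → Set ↥Helly := fun T => ⋃ s ∈ T, I s.1
  refine ⟨range A, countable_range A, ?_, fun U hU => ?_⟩
  · rintro _ ⟨T, rfl⟩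
    exact ⟨T.finite_toSet.isClosed_biUnion fun s _ => isClosed_I _,
      IsGδ.biUnion T.finite_toSet fun s _ => isGδ_I _⟩
  let 𝓖 : Set (Set ↥Helly) := {F | F ∈ range A ∧ F ⊆ U}
  have h𝓖 : 𝓖.Countable := (countable_range A).mono fun F hF => hF.1
  have hdir : DirectedOn ((· ⊆ ·) : Set ↥Helly → Set ↥Helly → Prop) 𝓖 := by
    rintro _ ⟨⟨T, rfl⟩, hT⟩ _ ⟨⟨T', rfl⟩, hT'⟩
    have hun : A (T ∪ T') = A T ∪ A T' := Finset.set_biUnion_union _ _ _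
    refine ⟨A (T ∪ T'), ⟨⟨_, rfl⟩, ?_⟩, ?_, ?_⟩
    · rw [hun]; exact union_subset hT hT'
    · rw [hun]; exact subset_union_left
    · rw [hun]; exact subset_union_right
  have hsup : μ (⋃ F ∈ 𝓖, F) = ⨆ F ∈ 𝓖, μ F :=
    measure_biUnion_eq_iSup (s := fun F => F) h𝓖 hdir
  have hrw : (⨆ (F : Set ↥Helly) (_ : F ∈ range A) (_ : F ⊆ U), μ F) = ⨆ F ∈ 𝓖, μ F := by
    refine iSup_congr fun F => ?_
    exact (iSup_and (s := fun (_ : F ∈ range A ∧ F ⊆ U) => μ F)).symm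
  rw [hrw, ← hsup]
  set W := ⋃ F ∈ 𝓖, F with hW
  have hWU : W ⊆ U := iUnion₂_subset fun F hF => hF.2
  have hWm : MeasurableSet W := by
    refine MeasurableSet.biUnion h𝓖 ?_
    rintro _ ⟨⟨T, rfl⟩, _⟩
    exact (T.finite_toSet.isClosed_biUnion fun s _ => isClosed_I _).measurableSet
  refine le_antisymm ?_ (measure_mono hWU)
  have hnull : μ (U \ W) = 0 := by
    rw [(hU.measurableSet.diff hWm).measure_eq_iSup_isCompact_of_ne_top (measure_ne_top _ _)]
    simp only [ENNReal.iSup_eq_zero]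
    intro K hKU hK
    refine hK.measure_zero_of_nhdsWithin fun x hx => ?_
    obtain ⟨U', hU', rfl⟩ := isOpen_induced_iff.1 hU
    obtain ⟨J, u, hu, hJ⟩ := isOpen_pi_iff.1 hU' x.1 (hKU hx).1
    let V : Set ↥Helly := Subtype.val ⁻¹' ((J : Set ↥unitInterval).pi u)
    have hV : IsOpen V := (isOpen_set_pi J.finite_toSet fun i hi => (hu i hi).1).preimage
      continuous_subtype_val
    have hxV : x ∈ V := fun i hi => (hu i hi).2
    refine ⟨V ∩ K, Filter.inter_mem (mem_nhdsWithin_of_mem_nhds (hV.mem_nhds hxV))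
      self_mem_nhdsWithin, ?_⟩
    have hae := (Finset.eventually_all J (l := ae μ)).2 fun t _ => hD t
    have hae2 : ∀ᵐ f ∂μ, ¬ f ∈ V ∩ K := by
      filter_upwards [hae] with f hf hfVK
      choose! s hsD hfs hgs using fun t (ht : t ∈ J) =>
        step D t f (hf t ht) (u t) (hu t ht).1 (hfVK.1 t ht)
      refine (hKU hfVK.2).2 ?_
      have hmem : J.biUnion s ∈ S := by
        intro p hp
        obtain ⟨t, ht, hp⟩ := Finset.mem_biUnion.1 hp
        exact hsD t ht p hp
      have hA : A {⟨J.biUnion s, hmem⟩} = I (J.biUnion s) :=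
        Finset.set_biUnion_singleton (⟨J.biUnion s, hmem⟩ : S) fun s : S => I s.1
      refine mem_biUnion (x := I (J.biUnion s)) ⟨⟨_, hA⟩, ?_⟩ ?_
      · intro g hg
        refine hJ fun t ht => hgs t ht g ?_
        exact mem_iInter₂.2 fun p hp =>
          mem_iInter₂.1 hg p (Finset.mem_biUnion.2 ⟨t, ht, hp⟩)
      · refine mem_iInter₂.2 fun p hp => ?_
        obtain ⟨t, ht, hp⟩ := Finset.mem_biUnion.1 hp
        exact mem_iInter₂.1 (hfs t ht) p hp
    simpa [ae_iff] using hae2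
  calc μ U ≤ μ (W ∪ U \ W) := measure_mono (by rw [union_sdiff_self]; exact subset_union_right)
    _ ≤ μ W + μ (U \ W) := measure_union_le _ _
    _ = μ W := by rw [hnull, add_zero]
end

section
/- Let λ be the standard product probability measure on 2^{ω₁} and let B be a Baire measurable subset of 2^{ω₁}. If (J_n)_{n∈ω} is a sequence of pairwise disjoint finite subsets of ω₁ and k ∈ ω is such that |J_n| ≤ k for every n, then lim_n λ(S_{J_n}(B)) = λ(B). -/
open MeasureTheory Set

/-- For `J ⊆ ι` and `B ⊆ 2^ι`, the set
`S_J(B) = 2^ι \ π_{ι∖J}⁻¹[π_{ι∖J}[2^ι \ B]]`, i.e. the set of all `x` such that every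
`y` agreeing with `x` outside `J` belongs to `B`. -/
def SJ {ι : Type*} (J : Set ι) (B : Set (ι → Bool)) : Set (ι → Bool) :=
  {x | ∀ y : ι → Bool, (∀ i, i ∉ J → y i = x i) → y ∈ B}

/-- Coordinatewise addition of `c`. -/
def flipBy {ι : Type*} (c : ι → Bool) (x : ι → Bool) : ι → Bool := fun i => xor (c i) (x i)

lemma measurable_flipBy {ι : Type*} (c : ι → Bool) : Measurable (flipBy c) := by
  refine measurable_pi_lambda _ fun i => ?_
  exact (measurable_of_countable (fun b : Bool => xor (c i) b)).comp (measurable_pi_apply i)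

lemma map_flipBy {ι : Type*} (lam : Measure (ι → Bool)) [IsProbabilityMeasure lam]
    (hlam : ∀ (I : Finset ι) (φ : ι → Bool),
      lam {x : ι → Bool | ∀ i ∈ I, x i = φ i} = (1 / 2 : ENNReal) ^ I.card)
    (c : ι → Bool) : lam.map (flipBy c) = lam := by
  classical
  have hm := measurable_flipBy c
  let C : Set (Set (ι → Bool)) :=
    {s | ∃ (I : Finset ι) (φ : ι → Bool), s = {x : ι → Bool | ∀ i ∈ I, x i = φ i}}
  have hCm : ∀ s ∈ C, MeasurableSet s := by
    rintro s ⟨I, φ, rfl⟩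
    have : {x : ι → Bool | ∀ i ∈ I, x i = φ i} = ⋂ i ∈ I, (fun x : ι → Bool => x i) ⁻¹' {φ i} := by
      ext x; simp
    rw [this]
    exact Finset.measurableSet_biInter _ fun i _ => measurable_pi_apply i (measurableSet_singleton _)
  refine (ext_of_generate_finite C ?_ ?_ ?_ ?_).symm
  · apply le_antisymm
    · refine iSup_le fun i => ?_
      rw [← measurable_iff_comap_le]
      refine @measurable_to_countable' _ _ _ _ (MeasurableSpace.generateFrom C) _ fun b => ?_
      refine MeasurableSpace.measurableSet_generateFrom ⟨{i}, fun _ => b, ?_⟩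
      ext x; simp
    · exact MeasurableSpace.generateFrom_le hCm
  · rintro s ⟨I, φ, rfl⟩ t ⟨I', φ', rfl⟩ ⟨z, hz, hz'⟩
    refine ⟨I ∪ I', z, ?_⟩
    ext x
    simp only [mem_inter_iff, mem_ofPred_eq, Finset.mem_union] at *
    constructor
    · rintro ⟨h1, h2⟩ i (hi | hi)
      · rw [h1 i hi, hz i hi]
      · rw [h2 i hi, hz' i hi]
    · intro h
      exact ⟨fun i hi => by rw [h i (Or.inl hi), hz i hi],
        fun i hi => by rw [h i (Or.inr hi), hz' i hi]⟩
  · rintro s ⟨I, φ, rfl⟩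
    rw [Measure.map_apply hm (hCm _ ⟨I, φ, rfl⟩), hlam]
    have : flipBy c ⁻¹' {x : ι → Bool | ∀ i ∈ I, x i = φ i}
        = {x : ι → Bool | ∀ i ∈ I, x i = flipBy c φ i} := by
      ext x
      simp only [mem_preimage, mem_ofPred_eq, flipBy]
      refine forall₂_congr fun i _ => ?_
      cases c i <;> cases x i <;> cases φ i <;> simp
    rw [this, hlam]
  · rw [Measure.map_apply hm MeasurableSet.univ, preimage_univ]

lemma SJ_bound {ι : Type*} (lam : Measure (ι → Bool)) [IsProbabilityMeasure lam]
    (hlam : ∀ (I : Finset ι) (φ : ι → Bool),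
      lam {x : ι → Bool | ∀ i ∈ I, x i = φ i} = (1 / 2 : ENNReal) ^ I.card)
    (B C : Set (ι → Bool)) (hB : MeasurableSet B) (hC : MeasurableSet C)
    (J : Finset ι) (hCJ : ∀ x y : ι → Bool, (∀ i, i ∉ J → y i = x i) → x ∈ C → y ∈ C)
    (δ : ENNReal) (hδ : lam (symmDiff B C) ≤ δ) :
    lam B ≤ lam (SJ (↑J : Set ι) B) + (1 + 2 ^ J.card) * δ := by
  classical
  let ind : Finset ι → ι → Bool := fun I i => decide (i ∈ I)
  have hsub : B ⊆ SJ (↑J : Set ι) B ∪ (symmDiff B C ∪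
      ⋃ I ∈ J.powerset, flipBy (ind I) ⁻¹' (symmDiff B C)) := by
    intro x hx
    by_cases hS : x ∈ SJ (↑J : Set ι) B
    · exact Or.inl hS
    right
    by_cases hxC : x ∈ C
    · right
      simp only [SJ, mem_ofPred_eq, not_forall] at hS
      obtain ⟨y, hy, hyB⟩ := hS
      have hyC : y ∈ C := hCJ x y (by simpa using hy) hxC
      simp only [mem_iUnion]
      refine ⟨J.filter (fun i => x i ≠ y i), by simp, ?_⟩
      have : flipBy (ind (J.filter (fun i => x i ≠ y i))) x = y := by
        funext i
        by_cases hi : i ∈ J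
        · simp only [flipBy, ind, Finset.mem_filter, hi, true_and]
          cases x i <;> cases y i <;> simp
        · simp [flipBy, ind, hi, hy i (by simpa using hi)]
      rw [mem_preimage, this]
      exact Or.inr ⟨hyC, hyB⟩
    · exact Or.inl (Or.inl ⟨hx, hxC⟩)
  have hD : MeasurableSet (symmDiff B C) := hB.symmDiff hC
  calc lam B ≤ lam (SJ (↑J : Set ι) B) + (lam (symmDiff B C) +
        lam (⋃ I ∈ J.powerset, flipBy (ind I) ⁻¹' (symmDiff B C))) :=
        (measure_mono hsub).trans ((measure_union_le _ _).trans
          (by gcongr; exact measure_union_le _ _))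
    _ ≤ lam (SJ (↑J : Set ι) B) + (δ + ∑ I ∈ J.powerset, δ) := by
        gcongr
        refine (measure_biUnion_finset_le _ _).trans (Finset.sum_le_sum fun I _ => ?_)
        rw [← Measure.map_apply (measurable_flipBy _) hD, map_flipBy lam hlam]
        exact hδ
    _ = _ := by simp [add_mul]

theorem tendsto_measure_SJ
    {ι : Type*} (hι : Cardinal.mk ι = Cardinal.aleph 1)
    (lam : Measure (ι → Bool)) [IsProbabilityMeasure lam]
    (hlam : ∀ (I : Finset ι) (φ : ι → Bool),
      lam {x : ι → Bool | ∀ i ∈ I, x i = φ i} = (1 / 2 : ENNReal) ^ I.card)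
    (B : Set (ι → Bool)) (hB : MeasurableSet B)
    (J : ℕ → Finset ι) (hJdisj : ∀ m n, m ≠ n → Disjoint (J m) (J n))
    (k : ℕ) (hk : ∀ n, (J n).card ≤ k) :
    Filter.Tendsto (fun n => lam (SJ (↑(J n) : Set ι) B)) Filter.atTop (nhds (lam B)) := by
  classical
  have halg : IsSetAlgebra (measurableCylinders (fun _ : ι => Bool)) :=
    ⟨empty_mem_measurableCylinders _, fun _ h => compl_mem_measurableCylinders h,
      fun _ _ h h' => union_mem_measurableCylinders h h'⟩
  have hdense := Measure.MeasureDense.of_generateFrom_isSetAlgebra_finite (μ := lam) halg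
    generateFrom_measurableCylinders.symm
  rw [ENNReal.tendsto_nhds (measure_ne_top _ _)]
  intro ε hε
  set K : ENNReal := 1 + 2 ^ k with hK
  have hK0 : K ≠ 0 := by simp [hK]
  have hKt : K ≠ ⊤ := by simp [hK]
  set e := min ε 1 / K with he
  have het : e ≠ ⊤ := ENNReal.div_ne_top (by simp) hK0
  have he0 : e ≠ 0 := by
    simp only [he, ne_eq, ENNReal.div_eq_zero_iff, not_or]
    exact ⟨(lt_min hε one_pos).ne', hKt⟩
  obtain ⟨C, hC, hBC⟩ := hdense.approx B hB (measure_ne_top _ _) e.toReal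
    (ENNReal.toReal_pos he0 het)
  rw [ENNReal.ofReal_toReal het] at hBC
  obtain ⟨F, S, hS, rfl⟩ := (mem_measurableCylinders _).mp hC
  have hev : ∀ᶠ n in Filter.atTop, Disjoint (J n) F := by
    have hfin : {n | ¬ Disjoint (J n) F}.Finite := by
      have h1 : {n | ¬ Disjoint (J n) F} ⊆ ⋃ i ∈ F, {n | i ∈ J n} := by
        intro n hn
        obtain ⟨i, hi, hiF⟩ := Finset.not_disjoint_iff.mp hn
        simp only [mem_iUnion]
        exact ⟨i, hiF, hi⟩
      refine (F.finite_toSet.biUnion fun i _ => ?_).subset h1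
      refine Set.Subsingleton.finite fun m hm n hn => ?_
      by_contra hmn
      exact Finset.disjoint_left.mp (hJdisj m n hmn) hm hn
    have := hfin.compl_mem_cofinite
    rw [Nat.cofinite_eq_atTop] at this
    filter_upwards [this] with n hn
    simpa using hn
  filter_upwards [hev] with n hn
  constructor
  · rw [tsub_le_iff_right]
    refine (SJ_bound lam hlam B _ hB hS.cylinder (J n) ?_ e hBC.le).trans ?_
    · intro x y hxy hx
      rw [mem_cylinder] at hx ⊢
      convert hx using 1
      funext i
      exact hxy i fun hi => Finset.disjoint_left.mp hn hi i.2
    · gcongr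
      calc (1 + 2 ^ (J n).card) * e ≤ K * e := by
            rw [hK]; gcongr
            · norm_num
            · exact hk n
        _ = min ε 1 := ENNReal.mul_div_cancel hK0 hKt
        _ ≤ ε := min_le_left _ _
  · refine (measure_mono ?_).trans le_self_add
    exact fun x hx => hx x fun _ _ => rfl
end
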